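/- Let G=(V,E) be a 3-connected circuit in the simple (2,2)-sparsity matroid, not isomorphic to a wheel or a cycle, with |V| ≥ 6 and no non-trivial 3-edge cutsets. Then the set of degree-3 vertices of G that are not contained in any copy of K4 induces a forest (a subgraph with no cycles) on at least two vertices. -/

import Mathlib

variable {V : Type*}

/-- The number of edges of `G` induced by the vertex set `X`. -/
noncomputable def indEdges (G : SimpleGraph V) (X : Set V) : ℕ :=
  {e ∈ G.edgeSet | ∀ v ∈ e, v ∈ X}.ncard

/-- A circuit in the simple (2,2)-sparsity matroid: `|E| = 2|V| - 1` and every proper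
subset of vertices induces at most `2|X| - 2` edges. -/
def IsCircuit [Fintype V] (G : SimpleGraph V) : Prop :=
  (G.edgeSet.ncard : ℤ) = 2 * Fintype.card V - 1 ∧
  ∀ X : Finset V, X ⊂ Finset.univ → indEdges G ↑X ≤ 2 * X.card - 2

/-- The degree of a vertex. -/
noncomputable def deg (G : SimpleGraph V) (v : V) : ℕ := (G.neighborSet v).ncard


/-- The number of edges of `G` with one endpoint in `A` and one endpoint in `B`. -/
noncomputable def crossEdges (G : SimpleGraph V) (A B : Set V) : ℕ :=
  {e ∈ G.edgeSet | ∃ a ∈ A, ∃ b ∈ B, e = s(a, b)}.ncard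

/-- `G` is a cycle graph: connected with every vertex of degree 2. -/
def IsCycleGraph (G : SimpleGraph V) : Prop :=
  G.Connected ∧ ∀ v : V, deg G v = 2

/-- `G` is a wheel: some hub is adjacent to all other vertices, and the rest induces
a cycle. -/
def IsWheel (G : SimpleGraph V) : Prop :=
  ∃ v : V, (∀ u : V, u ≠ v → G.Adj v u) ∧ IsCycleGraph (G.induce {x : V | x ≠ v})

/-- `G` is 3-connected: removing any set of at most 2 vertices leaves a connected
graph. -/
def ThreeConnected (G : SimpleGraph V) : Prop :=
  ∀ S : Set V, S.ncard ≤ 2 → (G.induce Sᶜ).Connected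

/-- `G` has a non-trivial 3-edge cutset: a bipartition of the vertices into two sides
with at least two vertices each and exactly 3 edges between them. -/
def HasNontrivialThreeEdgeCut [Fintype V] [DecidableEq V] (G : SimpleGraph V) : Prop :=
  ∃ A : Finset V, 2 ≤ A.card ∧ 2 ≤ (Finset.univ \ A).card ∧
    crossEdges G ↑A ↑(Finset.univ \ A) = 3

/-- The vertex `v` is contained in a copy of `K₄` in `G`. -/
def InK4 (G : SimpleGraph V) (v : V) : Prop :=
  ∃ s : Finset V, v ∈ s ∧ s.card = 4 ∧ ∀ a ∈ s, ∀ b ∈ s, a ≠ b → G.Adj a b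

section aux
open Finset Classical

lemma deg_eq_degree [Fintype V] (G : SimpleGraph V) (v : V) : deg G v = G.degree v := by
  unfold deg
  rw [← SimpleGraph.card_neighborFinset_eq_degree, ← Set.ncard_coe_finset]
  congr 1
  ext x; simp

lemma le_indEdges [Fintype V] (G : SimpleGraph V) (X : Finset V) (F : Finset (Sym2 V))
    (hF : ∀ e ∈ F, e ∈ G.edgeSet ∧ ∀ v ∈ e, v ∈ X) : F.card ≤ indEdges G ↑X := by
  unfold indEdges
  rw [← Set.ncard_coe_finset]
  apply Set.ncard_le_ncard _ (Set.toFinite _)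
  intro e he
  have := hF e (by simpa using he)
  exact ⟨this.1, fun v hv => by simpa using this.2 v hv⟩

lemma edge_ncard [Fintype V] (G : SimpleGraph V) : G.edgeSet.ncard = G.edgeFinset.card := by
  rw [← Set.ncard_coe_finset]; simp

lemma circ_edge [Fintype V] (G : SimpleGraph V) (hG : IsCircuit G) (hV : 6 ≤ Fintype.card V) :
    G.edgeFinset.card + 1 = 2 * Fintype.card V := by
  have := hG.1
  rw [edge_ncard] at this
  omega

lemma sum_deg [Fintype V] (G : SimpleGraph V) (hG : IsCircuit G) (hV : 6 ≤ Fintype.card V) :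
    ∑ v, G.degree v + 2 = 4 * Fintype.card V := by
  have := circ_edge G hG hV
  have h2 := G.sum_degrees_eq_twice_card_edges
  omega

lemma touch [Fintype V] (G : SimpleGraph V) (X : Finset V) (F : Finset (Sym2 V))
    (hF : ∀ e ∈ F, e ∈ G.edgeSet ∧ ∀ v ∈ e, v ∈ X) :
    G.edgeFinset.card + F.card ≤ indEdges G ↑(univ \ X) + ∑ x ∈ X, G.degree x := by
  have h1 : ∑ x ∈ X, G.degree x = ∑ e ∈ G.edgeFinset, (X.filter (fun x => x ∈ e)).card := by
    simp_rw [← SimpleGraph.card_incidenceFinset_eq_degree, SimpleGraph.incidenceFinset_eq_filter]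
    exact Finset.sum_card_bipartiteAbove_eq_sum_card_bipartiteBelow (fun x e => x ∈ e)
  have h2 := le_indEdges G (univ \ X) (G.edgeFinset.filter (fun e => ∀ v ∈ e, v ∉ X)) (by
    intro e he
    simp at he
    simpa using he)
  have hFs : F ⊆ G.edgeFinset := fun e he => by simpa using (hF e he).1
  have h3 : F.card = ∑ e ∈ G.edgeFinset, if e ∈ F then 1 else 0 := by
    rw [← Finset.card_filter]
    congr 1
    ext e
    simp only [mem_filter]
    exact ⟨fun h => ⟨hFs h, h⟩, fun h => h.2⟩
  rw [Finset.card_filter] at h2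
  have h4 : ∑ e ∈ G.edgeFinset, (1 + if e ∈ F then 1 else 0) ≤
      ∑ e ∈ G.edgeFinset, ((if ∀ v ∈ e, v ∉ X then 1 else 0)
        + (X.filter (fun x => x ∈ e)).card) := by
    apply Finset.sum_le_sum
    intro e he
    induction e using Sym2.ind with
    | _ a b =>
      have hab : a ≠ b := by
        have : G.Adj a b := by simpa using he
        exact this.ne
      split_ifs with h5 h6 h6
      · exact absurd ((hF _ h5).2 a (by simp)) (h6 a (by simp))
      · have : ({a, b} : Finset V) ⊆ X.filter (fun x => x ∈ s(a,b)) := by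
          intro x hx
          have hx' : x ∈ s(a,b) := by simpa using hx
          simp only [mem_filter]
          exact ⟨(hF _ h5).2 x hx', hx'⟩
        have := Finset.card_le_card this
        rw [Finset.card_pair hab] at this
        omega
      · omega
      · push Not at h6
        obtain ⟨x, hx, hxX⟩ := h6
        have : 0 < (X.filter (fun x => x ∈ s(a,b))).card :=
          Finset.card_pos.2 ⟨x, by simp only [mem_filter]; exact ⟨hxX, hx⟩⟩
        omega
  rw [Finset.sum_add_distrib, Finset.sum_add_distrib, ← h1, ← h3] at h4
  simp only [sum_const, smul_eq_mul, mul_one] at h4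
  omega

lemma min_deg [Fintype V] (G : SimpleGraph V) (hG : IsCircuit G) (hV : 6 ≤ Fintype.card V)
    (v : V) : 3 ≤ G.degree v := by
  have h := touch G {v} ∅ (by simp)
  have h1 := hG.2 (univ \ {v}) (by
    rw [Finset.ssubset_univ_iff]; intro h
    have := h ▸ mem_univ v
    simp at this)
  have h2 := circ_edge G hG hV
  have h3 : (univ \ {v} : Finset V).card + 1 = Fintype.card V := by
    rw [Finset.card_sdiff_of_subset (by simp)]; simp; omega
  simp only [card_empty, sum_singleton] at h
  omega

lemma no_cycle [Fintype V] (G : SimpleGraph V) (hG : IsCircuit G) (hV : 6 ≤ Fintype.card V)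
    (u : V) (c : G.Walk u u) (hc : c.IsCycle) (h : ∀ v ∈ c.support, G.degree v = 3) : False := by
  have hX : c.support.toFinset = c.support.tail.toFinset := by
    ext x
    simp only [List.mem_toFinset]
    rw [SimpleGraph.Walk.mem_support_iff]
    constructor
    · rintro (rfl | h)
      · exact SimpleGraph.Walk.end_mem_tail_support hc.not_nil
      · exact h
    · exact Or.inr
  have hXc : c.support.toFinset.card = c.length := by
    rw [hX, List.toFinset_card_of_nodup hc.support_nodup]
    simp
  have hFc : c.edges.toFinset.card = c.length := by
    rw [List.toFinset_card_of_nodup hc.edges_nodup]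
    simp
  have t := touch G c.support.toFinset c.edges.toFinset (by
    intro e he
    rw [List.mem_toFinset] at he
    refine ⟨c.edges_subset_edgeSet he, fun v hv => ?_⟩
    rw [List.mem_toFinset]
    exact SimpleGraph.Walk.mem_support_of_mem_edges he hv)
  have hs : ∑ x ∈ c.support.toFinset, G.degree x = 3 * c.length := by
    rw [Finset.sum_congr rfl (fun x hx => h x (by simpa using hx))]
    simp [hXc]; ring
  have h1 := hG.2 (univ \ c.support.toFinset) (by
    rw [Finset.ssubset_univ_iff]; intro h
    have := h ▸ mem_univ u
    simp at this)
  have h2 := circ_edge G hG hV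
  have h4 : (univ \ c.support.toFinset : Finset V).card + c.length = Fintype.card V := by
    rw [← hXc, Finset.card_sdiff_add_card_eq_card (by simp), Finset.card_univ]
  rw [hs, hFc] at t
  by_cases h5 : (univ \ c.support.toFinset : Finset V).card = 0
  · have h6 := sum_deg G hG hV
    have : ∀ v, G.degree v = 3 := by
      intro v
      apply h
      by_contra hv
      rw [Finset.card_eq_zero] at h5
      have : v ∈ univ \ c.support.toFinset := by simp [hv]
      rw [h5] at this
      simp at this
    simp [this] at h6
    omega
  · omega

lemma sep [Fintype V] (G : SimpleGraph V) (h3 : ThreeConnected G) (S A : Finset V)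
    (hS : S.card ≤ 2) (a b : V) (ha : a ∈ A) (haS : a ∉ S) (hb : b ∉ A) (hbS : b ∉ S) :
    ∃ x y, x ∈ A ∧ y ∉ A ∧ x ∉ S ∧ y ∉ S ∧ G.Adj x y := by
  have hc := h3 (S : Set V) (by simpa using hS)
  obtain ⟨w⟩ := hc.preconnected ⟨a, by simpa using haS⟩ ⟨b, by simpa using hbS⟩
  obtain ⟨d, hd, h1, h2⟩ := w.exists_boundary_dart {x | x.1 ∈ A} ha hb
  exact ⟨d.fst.1, d.snd.1, h1, h2, fun h => d.fst.2 h, fun h => d.snd.2 h, d.adj⟩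

lemma node_nbr [Fintype V] (G : SimpleGraph V) (X : Finset V) (hX : X.card = 4)
    (hK : ∀ a ∈ X, ∀ b ∈ X, a ≠ b → G.Adj a b) (u : V) (hu : u ∈ X) (hd : G.degree u = 3) :
    G.neighborFinset u = X.erase u := by
  symm
  apply Finset.eq_of_subset_of_card_le
  · intro x hx
    simp only [mem_erase] at hx
    simpa using hK u hu x hx.2 hx.1.symm
  · rw [SimpleGraph.card_neighborFinset_eq_degree, hd, Finset.card_erase_of_mem hu, hX]

lemma one_node [Fintype V] (G : SimpleGraph V) (h3 : ThreeConnected G)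
    (hV : 6 ≤ Fintype.card V) (X : Finset V) (hX : X.card = 4)
    (hK : ∀ a ∈ X, ∀ b ∈ X, a ≠ b → G.Adj a b) (u w : V) (hu : u ∈ X) (hw : w ∈ X)
    (hd : G.degree u = 3) (hd' : G.degree w = 3) : u = w := by
  by_contra hne
  have hb : ∃ b, b ∉ X := by
    by_contra h
    push Not at h
    have := Finset.card_le_card (fun x _ => h x : univ ⊆ X)
    rw [Finset.card_univ] at this
    omega
  obtain ⟨b, hb⟩ := hb
  have hbu : b ≠ u := by rintro rfl; exact hb hu
  have hbw : b ≠ w := by rintro rfl; exact hb hw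
  obtain ⟨x, y, hx, hy, hxS, hyS, hxy⟩ := sep G h3 ((X.erase u).erase w) {u, w} (by
    rw [Finset.card_erase_of_mem (by simp [hw, Ne.symm hne]), Finset.card_erase_of_mem hu, hX]) u b
    (by simp) (by simp) (by simp [hbu, hbw]) (by simp [hb])
  have hyX : y ∈ X := by
    simp only [mem_insert, mem_singleton] at hx
    rw [← SimpleGraph.mem_neighborFinset] at hxy
    rcases hx with rfl | rfl
    · rw [node_nbr G X hX hK _ hu hd] at hxy
      exact Finset.mem_of_mem_erase hxy
    · rw [node_nbr G X hX hK _ hw hd'] at hxy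
      exact Finset.mem_of_mem_erase hxy
  simp only [mem_insert, mem_singleton, not_or] at hy
  simp [hy, hyX] at hyS

lemma inter_le [Fintype V] (G : SimpleGraph V) (hG : IsCircuit G) (h3 : ThreeConnected G)
    (hV : 6 ≤ Fintype.card V) (X Y : Finset V) (hX : X.card = 4) (hY : Y.card = 4)
    (hKX : ∀ a ∈ X, ∀ b ∈ X, a ≠ b → G.Adj a b)
    (hKY : ∀ a ∈ Y, ∀ b ∈ Y, a ≠ b → G.Adj a b) (hne : X ≠ Y) : (X ∩ Y).card ≤ 1 := by
  by_contra hcon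
  have hlt : (X ∩ Y).card < 4 := by
    by_contra h
    have h1 := Finset.eq_of_subset_of_card_le (Finset.inter_subset_left : X ∩ Y ⊆ X) (by omega)
    have h2 := Finset.eq_of_subset_of_card_le (Finset.inter_subset_right : X ∩ Y ⊆ Y) (by omega)
    exact hne (h1.symm.trans h2)
  have hmem : ∀ (Z : Finset V) (a b : V), s(a,b) ∈ Z.offDiag.image Sym2.mk.uncurry ↔
      a ∈ Z ∧ b ∈ Z ∧ a ≠ b := by
    intro Z a b
    simp only [mem_image, mem_offDiag, Prod.exists, Function.uncurry, Sym2.eq_iff]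
    constructor
    · rintro ⟨x, y, ⟨h1, h2, h3⟩, (⟨rfl, rfl⟩ | ⟨rfl, rfl⟩)⟩
      · exact ⟨h1, h2, h3⟩
      · exact ⟨h2, h1, h3.symm⟩
    · rintro h
      exact ⟨a, b, h, Or.inl ⟨rfl, rfl⟩⟩
  set E : Finset V → Finset (Sym2 V) := fun Z => Z.offDiag.image Sym2.mk.uncurry with hE
  have hcard : ∀ Z, (E Z).card = Z.card.choose 2 := fun Z => Sym2.card_image_offDiag Z
  have hint : E X ∩ E Y ⊆ E (X ∩ Y) := by
    intro e
    induction e using Sym2.ind with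
    | _ a b =>
      simp only [mem_inter, hE, hmem]
      tauto
  have hc1 := Finset.card_le_card hint
  have hc2 := Finset.card_union_add_card_inter (E X) (E Y)
  have hc3 := Finset.card_union_add_card_inter X Y
  rw [hcard] at hc1
  rw [hcard, hcard, hX, hY] at hc2
  have h42 : Nat.choose 4 2 = 6 := rfl
  have h32 : Nat.choose 3 2 = 3 := rfl
  have h22 : Nat.choose 2 2 = 1 := rfl
  have hsub : ∀ e ∈ E X ∪ E Y, e ∈ G.edgeSet ∧ ∀ v ∈ e, v ∈ X ∪ Y := by
    intro e
    induction e using Sym2.ind with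
    | _ a b =>
      simp only [mem_union, hE, hmem, SimpleGraph.mem_edgeSet, Sym2.mem_iff]
      rintro (⟨h1, h2, h3⟩ | ⟨h1, h2, h3⟩)
      · refine ⟨hKX a h1 b h2 h3, ?_⟩
        rintro v (rfl | rfl) <;> simp [*]
      · refine ⟨hKY a h1 b h2 h3, ?_⟩
        rintro v (rfl | rfl) <;> simp [*]
  have hle := le_indEdges G (X ∪ Y) _ hsub
  by_cases hu : X ∪ Y = univ
  · have hn : (X ∪ Y).card = Fintype.card V := by rw [hu, Finset.card_univ]
    have hi2 : (X ∩ Y).card = 2 := by omega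
    have he := circ_edge G hG hV
    have hYX : ∃ b ∈ Y, b ∉ X := by
      by_contra h
      push Not at h
      exact hne (Finset.eq_of_subset_of_card_le h (by omega)).symm
    have hXY : ∃ b ∈ X, b ∉ Y := by
      by_contra h
      push Not at h
      exact hne (Finset.eq_of_subset_of_card_le h (by omega))
    obtain ⟨b, hbY, hbX⟩ := hYX
    obtain ⟨a, haX, haY⟩ := hXY
    obtain ⟨x, y, hx, hy, hxS, hyS, hxy⟩ := sep G h3 (X ∩ Y) X hi2.le a b haX (by simp [haY])
      hbX (by simp [hbX])
    have hxY : x ∉ Y := fun h => hxS (by simp [hx, h])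
    have hnot : s(x,y) ∉ E X ∪ E Y := by
      simp only [mem_union, hE, hmem]
      tauto
    have hins : insert s(x,y) (E X ∪ E Y) ⊆ G.edgeFinset := by
      intro e he
      rw [Finset.mem_insert] at he
      rw [SimpleGraph.mem_edgeFinset]
      rcases he with rfl | he
      · exact hxy
      · exact (hsub e he).1
    have := Finset.card_le_card hins
    rw [Finset.card_insert_of_notMem hnot] at this
    rw [hi2] at hc1
    omega
  · have h1 := hG.2 (X ∪ Y) (by rwa [Finset.ssubset_univ_iff])
    have : (X ∩ Y).card = 2 ∨ (X ∩ Y).card = 3 := by omega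
    rcases this with h | h <;> rw [h] at hc1 <;> omega

lemma exists_five [Fintype V] (G : SimpleGraph V) (hG : IsCircuit G)
    (h3 : ThreeConnected G)
    (hV : 6 ≤ Fintype.card V) (hcut : ¬ HasNontrivialThreeEdgeCut G)
    (X : Finset V) (hX : X.card = 4)
    (hK : ∀ a ∈ X, ∀ b ∈ X, a ≠ b → G.Adj a b) (u : V) (hu : u ∈ X)
    (hd : G.degree u = 3) : ∃ v ∈ X, v ≠ u ∧ 5 ≤ G.degree v := by
  by_contra hcon
  push Not at hcon
  have h4 : ∀ v ∈ X, v ≠ u → G.degree v = 4 := by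
    intro v hv hvu
    have h1 := hcon v hv hvu
    have h2 := min_deg G hG hV v
    have h3 : G.degree v ≠ 3 := fun h => hvu (one_node G h3 hV X hX hK v u hv hu h hd)
    omega
  have hout : ∀ v ∈ X, v ≠ u → ∃ y, G.neighborFinset v \ X = {y} := by
    intro v hv hvu
    rw [← Finset.card_eq_one]
    have e1 : G.neighborFinset v \ X = G.neighborFinset v \ X.erase v := by
      ext y
      simp only [mem_sdiff, mem_erase, SimpleGraph.mem_neighborFinset, not_and]
      constructor
      · rintro ⟨h, h'⟩; exact ⟨h, fun _ => h'⟩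
      · rintro ⟨h, h'⟩; exact ⟨h, h' h.ne'⟩
    rw [e1, Finset.card_sdiff_of_subset, SimpleGraph.card_neighborFinset_eq_degree, h4 v hv hvu,
      Finset.card_erase_of_mem hv, hX]
    intro x hx
    rw [Finset.mem_erase] at hx
    simpa using hK v hv x hx.2 hx.1.symm
  choose! g hg using hout
  have hg' : ∀ v ∈ X, v ≠ u → ∀ y, (G.Adj v y ∧ y ∉ X) ↔ y = g v := by
    intro v hv hvu y
    have := congrArg (fun s => y ∈ s) (hg v hv hvu)
    simpa using this
  apply hcut
  have hcc : (univ \ X).card + X.card = Fintype.card V := by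
    rw [Finset.card_sdiff_add_card_eq_card (by simp), Finset.card_univ]
  refine ⟨X, by omega, ?_, ?_⟩
  · convert (by omega : 2 ≤ (univ \ X).card)
  · have : {e ∈ G.edgeSet | ∃ a ∈ (X : Set V), ∃ b ∈ ((univ \ X : Finset V) : Set V), e = s(a, b)}
        = ((X.erase u).image (fun v => s(v, g v)) : Finset (Sym2 V)) := by
      ext e
      simp only [Set.mem_ofPred_eq, mem_coe, mem_sdiff, mem_univ, true_and, mem_image, mem_erase]
      constructor
      · rintro ⟨he, a, ha, b, hb, rfl⟩
        rw [SimpleGraph.mem_edgeSet] at he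
        have hau : a ≠ u := by
          rintro rfl
          rw [← SimpleGraph.mem_neighborFinset, node_nbr G X hX hK a hu hd] at he
          exact hb (Finset.mem_of_mem_erase he)
        exact ⟨a, ⟨hau, ha⟩, by rw [(hg' a ha hau b).1 ⟨he, hb⟩]⟩
      · rintro ⟨a, ⟨hau, ha⟩, rfl⟩
        have := (hg' a ha hau (g a)).2 rfl
        exact ⟨this.1, a, ha, g a, this.2, rfl⟩
    unfold crossEdges
    have h' : (Finset.univ \ X : Finset V) = univ \ X := rfl
    trans ((X.erase u).image (fun v => s(v, g v)) : Finset (Sym2 V)).card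
    · rw [← Set.ncard_coe_finset, ← this]
    · rw [Finset.card_image_of_injOn, Finset.card_erase_of_mem hu, hX]
      intro a ha b hb hab
      simp only [coe_erase, Set.mem_sdiff, mem_coe, Set.mem_singleton_iff] at ha hb
      simp only [Sym2.eq_iff] at hab
      rcases hab with h | h
      · exact h.1
      · exact absurd (h.1 ▸ ha.1) ((hg' b hb.1 hb.2 _).2 rfl).2

lemma two_le [Fintype V] (G : SimpleGraph V) (hG : IsCircuit G)
    (h3 : ThreeConnected G)
    (hV : 6 ≤ Fintype.card V) (hcut : ¬ HasNontrivialThreeEdgeCut G) :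
    2 ≤ (univ.filter (fun x => G.degree x = 3 ∧ ¬ InK4 G x)).card := by
  set P := univ.filter (fun x => G.degree x = 3 ∧ InK4 G x) with hP
  have hex : ∀ u, ∃ X : Finset V, ∃ v, u ∈ P → (u ∈ X ∧ X.card = 4 ∧
      (∀ a ∈ X, ∀ b ∈ X, a ≠ b → G.Adj a b) ∧ v ∈ X ∧ v ≠ u ∧ 5 ≤ G.degree v) := by
    intro u
    by_cases hu : u ∈ P
    · have hu' := hu
      simp only [hP, mem_filter, mem_univ, true_and] at hu'
      obtain ⟨hd, X, huX, hX, hK⟩ := hu'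
      obtain ⟨v, hv⟩ := exists_five G hG h3 hV hcut X hX hK u huX hd
      exact ⟨X, v, fun _ => ⟨huX, hX, hK, hv⟩⟩
    · exact ⟨∅, u, fun h => absurd h hu⟩
  choose K f hKf using hex
  have hdeg : ∀ u ∈ P, G.degree u = 3 := by
    intro u hu
    simp only [hP, mem_filter] at hu
    exact hu.2.1
  have hfib : ∀ v, 4 + (P.filter (fun u => f u = v)).card ≤
      G.degree v + (if G.degree v = 3 then 1 else 0) := by
    intro v
    have hm := min_deg G hG hV v
    set s := P.filter (fun u => f u = v) with hs
    have hsP : ∀ u ∈ s, u ∈ P ∧ f u = v := by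
      intro u hu; simpa [hs] using hu
    rcases s.eq_empty_or_nonempty with h0 | ⟨u0, hu0⟩
    · rw [h0]; simp only [card_empty]; split_ifs <;> omega
    · have h5 : 5 ≤ G.degree v := by
        obtain ⟨h1, h2⟩ := hsP u0 hu0
        have := (hKf u0 h1).2.2.2.2.2
        rwa [h2] at this
      have hd : 3 * s.card ≤ G.degree v := by
        have hdis : (s : Set V).PairwiseDisjoint (fun u => (K u).erase v) := by
          intro u hu w hw huw
          obtain ⟨h1, h2⟩ := hsP u hu
          obtain ⟨h1', h2'⟩ := hsP w hw
          obtain ⟨a1, a2, a3, a4, a5, a6⟩ := hKf u h1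
          obtain ⟨b1, b2, b3, b4, b5, b6⟩ := hKf w h1'
          rw [h2] at a4
          rw [h2'] at b4
          have hne : K u ≠ K w := by
            intro h
            rw [← h] at b1
            exact huw (one_node G h3 hV (K u) a2 a3 u w a1 b1 (hdeg u h1) (hdeg w h1'))
          have hi := inter_le G hG h3 hV (K u) (K w) a2 b2 a3 b3 hne
          show Disjoint ((K u).erase v) ((K w).erase v)
          rw [Finset.disjoint_left]
          intro x hx hx'
          rw [Finset.mem_erase] at hx hx'
          exact hx.1 (Finset.card_le_one.1 hi x (by simp [hx, hx']) v (by simp [a4, b4]))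
        have hc := Finset.card_biUnion hdis
        rw [Finset.sum_congr rfl (g := fun _ => 3)] at hc
        · rw [← SimpleGraph.card_neighborFinset_eq_degree]
          simp only [sum_const, smul_eq_mul] at hc
          rw [mul_comm, ← hc]
          apply Finset.card_le_card
          intro x hx
          simp only [mem_biUnion, mem_erase] at hx
          obtain ⟨u, hu, hxv, hx⟩ := hx
          obtain ⟨h1, h2⟩ := hsP u hu
          obtain ⟨a1, a2, a3, a4, a5, a6⟩ := hKf u h1
          rw [h2] at a4
          simpa using a3 v a4 x hx hxv.symm
        · intro u hu
          obtain ⟨h1, h2⟩ := hsP u hu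
          obtain ⟨a1, a2, a3, a4, a5, a6⟩ := hKf u h1
          rw [h2] at a4
          rw [Finset.card_erase_of_mem a4, a2]
      split_ifs <;> omega
  have hsum := Finset.sum_le_sum (fun v (_ : v ∈ univ) => hfib v)
  rw [Finset.sum_add_distrib, Finset.sum_add_distrib, ← Finset.card_filter,
    ← Finset.card_eq_sum_card_fiberwise (f := f) (fun _ _ => by simp)] at hsum
  have hs := sum_deg G hG hV
  have hsplit : P.card + (univ.filter (fun x => G.degree x = 3 ∧ ¬ InK4 G x)).card =
      (univ.filter (fun x => G.degree x = 3)).card := by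
    have h := Finset.card_filter_add_card_filter_not
      (s := univ.filter (fun x => G.degree x = 3)) (fun x => InK4 G x)
    rw [Finset.filter_filter, Finset.filter_filter] at h
    rw [← h]
  simp only [sum_const, smul_eq_mul, Finset.card_univ] at hsum
  omega

end aux

theorem nodes_not_in_K4_forest [Fintype V] [DecidableEq V] (G : SimpleGraph V)
    (hG : IsCircuit G) (h3 : ThreeConnected G)
    (hcyc : ¬ IsCycleGraph G) (hwheel : ¬ IsWheel G)
    (hV : 6 ≤ Fintype.card V)
    (hcut : ¬ HasNontrivialThreeEdgeCut G) :
    (G.induce {x : V | deg G x = 3 ∧ ¬ InK4 G x}).IsAcyclic ∧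
      2 ≤ {x : V | deg G x = 3 ∧ ¬ InK4 G x}.ncard := by
  classical
  constructor
  · intro u c hc
    have hinj : Function.Injective
      (SimpleGraph.Embedding.induce {x : V | deg G x = 3 ∧ ¬ InK4 G x} (G := G)).toHom :=
      Subtype.val_injective
    refine no_cycle G hG hV _ _ (hc.map hinj) ?_
    intro v hv
    rw [SimpleGraph.Walk.support_map, List.mem_map] at hv
    obtain ⟨w, _, rfl⟩ := hv
    have := w.2.1
    rw [deg_eq_degree] at this
    convert this
    rfl
  · have h := two_le G hG h3 hV (by convert hcut)
    rw [← Set.ncard_coe_finset] at h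
    convert h using 2
    ext x
    simp [deg_eq_degree]
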